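/- Fix real α, β > −1, j ∈ ℕ, γ ∈ ℝ, M > 0, and a sequence M_n ≥ 0 with lim_{n→∞} M_n n^γ = M. If γ > 2(α+2j+1), then for every fixed k ∈ ℕ, lim_{n→∞} Q_n^{(k)}(1)/(P_n^{(α,β)})^{(k)}(1) = 1. -/

import Mathlib

open Polynomial Filter

/-- The Jacobi polynomial `P_n^{(α,β)}` as a real polynomial. -/
noncomputable def jacobiP (α β : ℝ) (n : ℕ) : Polynomial ℝ :=
  ∑ k ∈ Finset.range (n + 1),
    Polynomial.C (Real.Gamma (n + α + 1) / (Real.Gamma ((n : ℝ) - k + 1) * Real.Gamma (α + k + 1)) *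
        (Real.Gamma (n + β + 1) / (Real.Gamma ((k : ℝ) + 1) * Real.Gamma ((n : ℝ) - k + β + 1)))) *
      (Polynomial.C (2⁻¹ : ℝ) * (Polynomial.X - 1)) ^ k *
      (Polynomial.C (2⁻¹ : ℝ) * (Polynomial.X + 1)) ^ (n - k)

/-- The squared Jacobi norm `‖P_n^{(α,β)}‖²`. -/
noncomputable def jacobiNormSq (α β : ℝ) (n : ℕ) : ℝ :=
  ∫ x in (-1 : ℝ)..1, (jacobiP α β n).eval x ^ 2 * (1 - x) ^ α * (1 + x) ^ β

/-- The kernel `K_n^{(j,k)}(x,y)`. -/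
noncomputable def kernK (α β : ℝ) (j k n : ℕ) (x y : ℝ) : ℝ :=
  ∑ i ∈ Finset.range (n + 1),
    (Polynomial.derivative^[j] (jacobiP α β i)).eval x *
      (Polynomial.derivative^[k] (jacobiP α β i)).eval y / jacobiNormSq α β i

/-- The kernel `K_n^{(j,0)}(1,·)` as a polynomial. -/
noncomputable def kernKPoly (α β : ℝ) (j n : ℕ) : Polynomial ℝ :=
  ∑ i ∈ Finset.range (n + 1),
    Polynomial.C ((Polynomial.derivative^[j] (jacobiP α β i)).eval 1 / jacobiNormSq α β i) *
      jacobiP α β i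

/-- The varying Sobolev inner product `(f,g)_{S,n}` with mass `m`. -/
noncomputable def sobInner (α β : ℝ) (j : ℕ) (m : ℝ) (f g : Polynomial ℝ) : ℝ :=
  (∫ x in (-1 : ℝ)..1, f.eval x * g.eval x * (1 - x) ^ α * (1 + x) ^ β) +
    m * (Polynomial.derivative^[j] f).eval 1 * (Polynomial.derivative^[j] g).eval 1

/-- The Jacobi–Sobolev orthogonal polynomial `Q_n`. -/
noncomputable def sobQ (α β : ℝ) (j : ℕ) (Ms : ℕ → ℝ) (n : ℕ) : Polynomial ℝ :=
  jacobiP α β n -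
    Polynomial.C (Ms n * (Polynomial.derivative^[j] (jacobiP α β n)).eval 1 /
        (1 + Ms n * kernK α β j j (n - 1) 1 1)) *
      kernKPoly α β j (n - 1)

open MeasureTheory Asymptotics in
/-- beta integral on `[0,1]`. -/
theorem aux_beta01 (u v : ℝ) (hu : 0 < u) (hv : 0 < v) :
    IntervalIntegrable (fun x : ℝ => x ^ (u - 1) * (1 - x) ^ (v - 1)) volume 0 1 ∧
    ∫ x in (0 : ℝ)..1, x ^ (u - 1) * (1 - x) ^ (v - 1) =
      Real.Gamma u * Real.Gamma v / Real.Gamma (u + v) := by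
  have hc := Complex.betaIntegral_convergent (u := u) (v := v) (by simpa) (by simpa)
  have hEq : Set.EqOn (fun x : ℝ => (((x ^ (u - 1) * (1 - x) ^ (v - 1) : ℝ)) : ℂ))
      (fun x : ℝ => (x : ℂ) ^ ((u : ℂ) - 1) * (1 - (x : ℂ)) ^ ((v : ℂ) - 1)) (Set.uIcc 0 1) := by
    intro x hx
    rw [Set.uIcc_of_le zero_le_one] at hx
    simp only
    push_cast
    rw [Complex.ofReal_cpow hx.1, Complex.ofReal_cpow (by linarith [hx.2])]
    push_cast
    rfl
  constructor
  · have h2 : IntervalIntegrable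
        (fun x : ℝ => (((x ^ (u - 1) * (1 - x) ^ (v - 1) : ℝ)) : ℂ)) volume 0 1 := by
      refine hc.congr ?_
      intro x hx
      exact (hEq (Set.uIoc_subset_uIcc hx)).symm
    rw [intervalIntegrable_iff] at h2 ⊢
    exact h2.re
  · have h3 : (∫ x in (0 : ℝ)..1, (((x ^ (u - 1) * (1 - x) ^ (v - 1) : ℝ)) : ℂ)) =
        Complex.betaIntegral u v := intervalIntegral.integral_congr hEq
    rw [intervalIntegral.integral_ofReal] at h3
    have h4 := ProbabilityTheory.beta_eq_betaIntegralReal u v hu hv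
    rw [← h3, Complex.ofReal_re] at h4
    rw [← h4, ProbabilityTheory.beta]

open MeasureTheory in
/-- beta integral on `[-1,1]`. -/
theorem aux_beta (a b : ℝ) (ha : -1 < a) (hb : -1 < b) :
    IntervalIntegrable (fun x : ℝ => (1 - x) ^ a * (1 + x) ^ b) volume (-1) 1 ∧
    ∫ x in (-1 : ℝ)..1, (1 - x) ^ a * (1 + x) ^ b =
      2 ^ (a + b + 1) * (Real.Gamma (a + 1) * Real.Gamma (b + 1) / Real.Gamma (a + b + 2)) := by
  obtain ⟨h1, h2⟩ := aux_beta01 (b + 1) (a + 1) (by linarith) (by linarith)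
  simp only [add_sub_cancel_right] at h1 h2
  have key : Set.EqOn (fun x : ℝ => 2 ^ (a + b) * ((x / 2 + 1 / 2) ^ b * (1 - (x / 2 + 1 / 2)) ^ a))
      (fun x : ℝ => (1 - x) ^ a * (1 + x) ^ b) (Set.uIcc (-1) 1) := by
    intro x hx
    rw [Set.uIcc_of_le (by norm_num)] at hx
    simp only
    rw [show 1 - x = 2 * (1 - (x / 2 + 1 / 2)) by ring, show 1 + x = 2 * (x / 2 + 1 / 2) by ring,
      Real.mul_rpow (by norm_num) (by linarith [hx.2]),
      Real.mul_rpow (by norm_num) (by linarith [hx.1]), Real.rpow_add (by norm_num)]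
    ring
  constructor
  · have h3 := (h1.comp_add_right (1 / 2)).comp_mul_left (c := 1 / 2)
    have h5 := h3.const_mul (2 ^ (a + b))
    norm_num at h5
    refine IntervalIntegrable.congr ?_ h5
    intro x hx
    have := key (Set.uIoc_subset_uIcc hx)
    simp only at this ⊢
    rw [← this]
    ring_nf
  · rw [← intervalIntegral.integral_congr key, intervalIntegral.integral_const_mul,
      intervalIntegral.integral_comp_div_add
        (fun x : ℝ => x ^ b * (1 - x) ^ a) (by norm_num : (2 : ℝ) ≠ 0)]
    norm_num
    rw [h2, Real.rpow_add_one (by norm_num), show b + 1 + (a + 1) = a + b + 2 by ring]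
    ring

theorem aux_gamma_prod (s : ℝ) (hs : 0 < s) (m : ℕ) :
    Real.Gamma (s + m) = Real.Gamma s * ∏ j ∈ Finset.range m, (s + j) := by
  induction m with
  | zero => simp
  | succ m ih =>
    rw [Finset.prod_range_succ, ← mul_assoc, ← ih]
    push_cast
    rw [← add_assoc, Real.Gamma_add_one (by positivity)]
    ring

open Asymptotics

theorem aux_gamma_asym_shift (a : ℝ) (m : ℕ) (hm : 0 < a + m) :
    Tendsto (fun n : ℕ => Real.Gamma (n + a + 1) / (n.factorial * (n : ℝ) ^ a)) atTop (nhds 1) := by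
  induction m generalizing a with
  | zero =>
    simp only [Nat.cast_zero, add_zero] at hm
    have h := Real.GammaSeq_tendsto_Gamma a
    have hG := Real.Gamma_pos_of_pos hm
    have h2 := (h.inv₀ hG.ne').const_mul (Real.Gamma a)
    rw [mul_inv_cancel₀ hG.ne'] at h2
    refine h2.congr fun n => ?_
    rw [Real.GammaSeq, show (n : ℝ) + a + 1 = a + ((n + 1 : ℕ) : ℝ) by push_cast; ring,
      aux_gamma_prod a hm]
    simp only [div_eq_mul_inv, mul_inv, inv_inv]
    ring
  | succ m ih =>
    have h := ih (a + 1) (by push_cast at hm; linarith)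
    have h1 : Tendsto (fun n : ℕ => (n : ℝ) / (n + (a + 1))) atTop (nhds 1) :=
      tendsto_natCast_div_add_atTop (a + 1)
    have h2 := h.mul h1
    rw [mul_one] at h2
    refine h2.congr' ?_
    filter_upwards [eventually_gt_atTop 0, eventually_gt_atTop ⌈-a⌉₊] with n hn hn2
    have h3 : (0 : ℝ) < n := by exact_mod_cast hn
    have h4 : -a < n := (Nat.le_ceil _).trans_lt (by exact_mod_cast hn2)
    have h5 : (0 : ℝ) < n + a + 1 := by linarith
    rw [← add_assoc, Real.Gamma_add_one h5.ne', Real.rpow_add_one h3.ne']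
    field_simp

theorem aux_gamma_equiv (a : ℝ) :
    (fun n : ℕ => Real.Gamma (n + a + 1)) ~[atTop] (fun n : ℕ => n.factorial * (n : ℝ) ^ a) := by
  have h := aux_gamma_asym_shift a (⌈-a⌉₊ + 1) (by push_cast; linarith [Nat.le_ceil (-a)])
  rw [isEquivalent_iff_tendsto_one]
  · exact h
  · filter_upwards [eventually_gt_atTop 0] with n hn
    have h3 : (0 : ℝ) < n := by exact_mod_cast hn
    positivity

theorem aux_sum_rpow (s : ℝ) (hs : -1 < s) : ∃ C : ℝ, 0 ≤ C ∧ ∀ n : ℕ,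
    ∑ i ∈ Finset.range n, ((i + 1 : ℕ) : ℝ) ^ s ≤ C * (n : ℝ) ^ (s + 1) := by
  rcases le_or_gt 0 s with h | h
  · refine ⟨1, zero_le_one, fun n => ?_⟩
    rcases Nat.eq_zero_or_pos n with rfl | hn
    · simp; positivity
    have h3 : (0 : ℝ) < n := by exact_mod_cast hn
    calc ∑ i ∈ Finset.range n, ((i + 1 : ℕ) : ℝ) ^ s ≤ ∑ i ∈ Finset.range n, (n : ℝ) ^ s := by
          refine Finset.sum_le_sum fun i hi => ?_
          apply Real.rpow_le_rpow (by positivity) _ h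
          have := Finset.mem_range.1 hi
          exact_mod_cast this
      _ = 1 * (n : ℝ) ^ (s + 1) := by
          rw [Finset.sum_const, Finset.card_range, nsmul_eq_mul, Real.rpow_add_one h3.ne']; ring
  · have hp : 0 < s + 1 := by linarith
    refine ⟨(s + 1)⁻¹, by positivity, fun n => ?_⟩
    induction n with
    | zero => simp; positivity
    | succ n ih =>
      rw [Finset.sum_range_succ]
      have hx : (0 : ℝ) < ((n + 1 : ℕ) : ℝ) := by positivity
      have hb := rpow_one_add_le_one_add_mul_self (s := -1 / ((n + 1 : ℕ) : ℝ)) (p := s + 1)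
        (by rw [le_div_iff₀ hx]; push_cast; linarith [(Nat.cast_nonneg n : (0 : ℝ) ≤ n)])
        hp.le (by linarith)
      have h1 : (1 + -1 / ((n + 1 : ℕ) : ℝ)) = n / ((n + 1 : ℕ) : ℝ) := by
        field_simp; push_cast; ring
      rw [h1, Real.div_rpow (by positivity) (by positivity),
        div_le_iff₀ (by positivity), Real.rpow_add_one hx.ne'] at hb
      have h2 : (s + 1) * ((n + 1 : ℕ) : ℝ) ^ s ≤
          ((n + 1 : ℕ) : ℝ) ^ (s + 1) - (n : ℝ) ^ (s + 1) := by
        rw [Real.rpow_add_one hx.ne']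
        have : (1 + (s + 1) * (-1 / ((n + 1 : ℕ) : ℝ))) * (((n + 1 : ℕ) : ℝ) ^ s * ((n + 1 : ℕ) : ℝ))
          = ((n + 1 : ℕ) : ℝ) ^ s * ((n + 1 : ℕ) : ℝ) - (s + 1) * ((n + 1 : ℕ) : ℝ) ^ s := by
          field_simp; ring
        linarith
      have h3 : ((n + 1 : ℕ) : ℝ) ^ s ≤
          (s + 1)⁻¹ * (((n + 1 : ℕ) : ℝ) ^ (s + 1) - (n : ℝ) ^ (s + 1)) := by
        rw [inv_mul_eq_div, le_div_iff₀ hp]; linarith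
      linarith

theorem aux_desc (r : ℝ) (m : ℕ) (h : 0 < r - m + 1) :
    (descPochhammer ℤ m).smeval r = Real.Gamma (r + 1) / Real.Gamma (r - m + 1) := by
  induction m with
  | zero =>
    simp only [Nat.cast_zero, sub_zero] at h
    simp [div_self (Real.Gamma_pos_of_pos h).ne']
  | succ m ih =>
    push_cast at h
    rw [descPochhammer_succ_right, Polynomial.smeval_mul, ih (by linarith), Polynomial.smeval_sub,
      Polynomial.smeval_X, Polynomial.smeval_natCast]
    push_cast
    have h1 : 0 < r - m := by linarith
    rw [show r - (m + 1) + 1 = r - m by ring, Real.Gamma_add_one h1.ne']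
    have := (Real.Gamma_pos_of_pos h1).ne'
    simp
    field_simp

/-- coefficient in the Jacobi polynomial -/
noncomputable def jc (α β : ℝ) (n k : ℕ) : ℝ :=
  Real.Gamma (n + α + 1) / (Real.Gamma ((n : ℝ) - k + 1) * Real.Gamma (α + k + 1)) *
        (Real.Gamma (n + β + 1) / (Real.Gamma ((k : ℝ) + 1) * Real.Gamma ((n : ℝ) - k + β + 1)))

theorem aux_jacobi_eq (α β : ℝ) (n : ℕ) : jacobiP α β n = ∑ k ∈ Finset.range (n + 1),
    Polynomial.C (jc α β n k) *
      (Polynomial.C (2⁻¹ : ℝ) * (Polynomial.X - 1)) ^ k *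
      (Polynomial.C (2⁻¹ : ℝ) * (Polynomial.X + 1)) ^ (n - k) := rfl

theorem aux_gamma_sub (n k : ℕ) (h : k ≤ n) :
    Real.Gamma ((n : ℝ) - k + 1) = ((n - k).factorial : ℝ) := by
  rw [← Nat.cast_sub h, Real.Gamma_nat_eq_factorial]

theorem aux_taylor_coeff (α β : ℝ) (n k : ℕ) :
    (taylor 1 (jacobiP α β n)).coeff k = ∑ i ∈ Finset.range (n + 1),
      jc α β n i * ((if i ≤ k then ((n - i).choose (k - i) : ℝ) else 0) * 2⁻¹ ^ k) := by
  rw [aux_jacobi_eq, map_sum, finsetSum_coeff]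
  refine Finset.sum_congr rfl fun i hi => ?_
  rw [mul_assoc, taylor_mul, taylor_C, coeff_C_mul]
  congr 1
  have : taylor 1 ((C (2⁻¹ : ℝ) * (X - 1)) ^ i * (C (2⁻¹ : ℝ) * (X + 1)) ^ (n - i)) =
      (X ^ i * (X + 1) ^ (n - i) : ℝ[X]).comp (C (2⁻¹ : ℝ) * X) := by
    rw [taylor_mul, taylor_pow, taylor_pow, taylor_mul, taylor_mul, taylor_C, mul_comp, pow_comp,
      pow_comp]
    congr 2
    · simp
    · simp
      have h2 : (C (2⁻¹ : ℝ)) * 2 = 1 := by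
        rw [show (2 : ℝ[X]) = C 2 by rfl, ← C_mul]; norm_num
      linear_combination h2
  rw [this, comp_C_mul_X_coeff, coeff_X_pow_mul', coeff_X_add_one_pow]

theorem aux_natDegree (α β : ℝ) (n : ℕ) : (taylor 1 (jacobiP α β n)).natDegree < n + 1 := by
  rw [Nat.lt_succ_iff, natDegree_le_iff_coeff_eq_zero]
  intro k hk
  rw [aux_taylor_coeff]
  refine Finset.sum_eq_zero fun i hi => ?_
  have := Finset.mem_range.1 hi
  rw [if_pos (by omega), Nat.choose_eq_zero_of_lt (by omega)]
  simp

theorem aux_deriv_eval (p : ℝ[X]) (k : ℕ) :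
    (derivative^[k] p).eval 1 = k.factorial * (taylor 1 p).coeff k := by
  rw [taylor_coeff, ← factorial_smul_hasseDeriv]
  simp

open MeasureTheory in
theorem aux_mono (α β : ℝ) (hα : -1 < α) (hβ : -1 < β) (p q : ℕ) :
    IntervalIntegrable (fun x : ℝ => (1 - x) ^ p * (1 + x) ^ q * (1 - x) ^ α * (1 + x) ^ β)
      volume (-1) 1 ∧
    ∫ x in (-1 : ℝ)..1, (1 - x) ^ p * (1 + x) ^ q * (1 - x) ^ α * (1 + x) ^ β =
      2 ^ (α + p + (β + q) + 1) * (Real.Gamma (α + p + 1) * Real.Gamma (β + q + 1) /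
        Real.Gamma (α + p + (β + q) + 2)) := by
  have hp : (0 : ℝ) ≤ p := p.cast_nonneg
  have hq : (0 : ℝ) ≤ q := q.cast_nonneg
  obtain ⟨h1, h2⟩ := aux_beta (α + p) (β + q) (by linarith) (by linarith)
  have key : Set.EqOn (fun x : ℝ => (1 - x) ^ (α + p) * (1 + x) ^ (β + q))
    (fun x : ℝ => (1 - x) ^ p * (1 + x) ^ q * (1 - x) ^ α * (1 + x) ^ β) (Set.uIoo (-1) 1) := by
    intro x hx
    rw [Set.uIoo_of_le (by norm_num)] at hx
    simp only
    rw [Real.rpow_add_natCast (by linarith [hx.2]), Real.rpow_add_natCast (by linarith [hx.1])]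
    ring
  refine ⟨h1.congr_uIoo key, ?_⟩
  rw [← h2]
  rw [intervalIntegral.integral_of_le (by norm_num), intervalIntegral.integral_of_le (by norm_num),
    integral_Ioc_eq_integral_Ioo, integral_Ioc_eq_integral_Ioo]
  refine setIntegral_congr_fun measurableSet_Ioo fun x hx => ?_
  exact (key (by rwa [Set.uIoo_of_le (by norm_num)])).symm

theorem aux_asc_gamma (s : ℝ) (hs : 0 < s) (m : ℕ) :
    Real.Gamma (s + m) = Real.Gamma s * (ascPochhammer ℝ m).eval s := by
  induction m with
  | zero => simp
  | succ m ih =>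
    push_cast
    rw [← add_assoc, Real.Gamma_add_one (by positivity), ih, ascPochhammer_succ_right]
    simp
    ring


theorem aux_fwd (p : ℝ[X]) (n : ℕ) (y : ℝ) (hp : p.natDegree < n) :
    (fwdDiff (1 : ℝ))^[n] (fun r : ℝ => p.eval r) y = 0 := by
  have := congrFun (fwdDiff_iter_sum_mul_pow_eq_zero (R := ℝ) (n := n) (fun k => p.coeff k)) y
  simp_rw [eval_eq_sum_range' hp]
  exact this


theorem aux_fwd_monic (p : ℝ[X]) (n : ℕ) (y : ℝ) (hp : p.natDegree = n) (hm : p.Monic) :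
    (fwdDiff (1 : ℝ))^[n] (fun r : ℝ => p.eval r) y = n.factorial := by
  have h1 : (fun r : ℝ => p.eval r) = (fun r : ℝ => ∑ k ∈ Finset.range n, p.coeff k * r ^ k) +
      fun r : ℝ => r ^ n := by
    funext r
    rw [eval_eq_sum_range, hp, Finset.sum_range_succ, ← hp, hm.coeff_natDegree]
    simp
  rw [h1, fwdDiff_iter_add, fwdDiff_iter_sum_mul_pow_eq_zero, fwdDiff_iter_eq_factorial]
  simp


theorem aux_fwd_sum (f : ℝ → ℝ) (n : ℕ) (y : ℝ) :
    ∑ k ∈ Finset.range (n + 1), (-1) ^ k * (n.choose k : ℝ) * f (y + k) =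
      (-1) ^ n * (fwdDiff (1 : ℝ))^[n] f y := by
  rw [fwdDiff_iter_eq_sum_shift, Finset.mul_sum]
  refine Finset.sum_congr rfl fun k hk => ?_
  have hk := Finset.mem_range.1 hk
  obtain ⟨d, rfl⟩ := Nat.exists_eq_add_of_le (Nat.lt_succ_iff.1 hk)
  simp only [zsmul_eq_mul, nsmul_eq_mul, mul_one, add_tsub_cancel_left]
  push_cast
  have : ((-1 : ℝ) ^ d) * (-1) ^ d = 1 := by rw [← mul_pow]; simp
  rw [pow_add]
  linear_combination (-(-1 : ℝ) ^ k * ((k + d).choose k : ℝ) * f (y + k)) * this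

open MeasureTheory in
theorem aux_J (α β : ℝ) (hα : -1 < α) (hβ : -1 < β) (n m : ℕ) :
    IntervalIntegrable (fun x : ℝ => (jacobiP α β n).eval x * (1 - x) ^ m *
      (1 - x) ^ α * (1 + x) ^ β) volume (-1) 1 ∧
    ∫ x in (-1 : ℝ)..1, (jacobiP α β n).eval x * (1 - x) ^ m * (1 - x) ^ α * (1 + x) ^ β =
      2 ^ (α + β + m + 1) * (Real.Gamma (n + α + 1) * Real.Gamma (n + β + 1) /
        Real.Gamma (α + β + m + n + 2)) * ((n.factorial : ℝ)⁻¹ * ((-1) ^ n *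
          (fwdDiff (1 : ℝ))^[n] (fun r : ℝ => (ascPochhammer ℝ m).eval r) (α + 1))) := by
  have hf : (fun x : ℝ => (jacobiP α β n).eval x * (1 - x) ^ m * (1 - x) ^ α * (1 + x) ^ β) =
      fun x : ℝ => ∑ k ∈ Finset.range (n + 1), (jc α β n k * ((-1) ^ k * 2⁻¹ ^ n)) *
        ((1 - x) ^ (m + k) * (1 + x) ^ (n - k) * (1 - x) ^ α * (1 + x) ^ β) := by
    funext x
    rw [aux_jacobi_eq, eval_finsetSum, Finset.sum_mul, Finset.sum_mul, Finset.sum_mul]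
    refine Finset.sum_congr rfl fun k hk => ?_
    obtain ⟨d, rfl⟩ := Nat.exists_eq_add_of_le (Nat.lt_succ_iff.1 (Finset.mem_range.1 hk))
    simp only [eval_mul, eval_C, eval_pow, eval_sub, eval_X, eval_one, eval_add,
      add_tsub_cancel_left]
    rw [show x - 1 = (-1) * (1 - x) by ring]
    simp only [mul_pow, pow_add]
    ring
  rw [hf]
  have hI : ∀ k ∈ Finset.range (n + 1), IntervalIntegrable (fun x : ℝ =>
      (jc α β n k * ((-1) ^ k * 2⁻¹ ^ n)) *
        ((1 - x) ^ (m + k) * (1 + x) ^ (n - k) * (1 - x) ^ α * (1 + x) ^ β)) volume (-1) 1 :=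
    fun k hk => (aux_mono α β hα hβ (m + k) (n - k)).1.const_mul _
  constructor
  · have := IntervalIntegrable.sum (Finset.range (n + 1)) hI
    have h2 : (∑ k ∈ Finset.range (n + 1), fun x : ℝ => (jc α β n k * ((-1) ^ k * 2⁻¹ ^ n)) *
        ((1 - x) ^ (m + k) * (1 + x) ^ (n - k) * (1 - x) ^ α * (1 + x) ^ β)) =
      fun x : ℝ => ∑ k ∈ Finset.range (n + 1), (jc α β n k * ((-1) ^ k * 2⁻¹ ^ n)) *
        ((1 - x) ^ (m + k) * (1 + x) ^ (n - k) * (1 - x) ^ α * (1 + x) ^ β) := by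
      funext x
      simp
    rw [h2] at this
    exact this
  rw [intervalIntegral.integral_finsetSum hI, ← aux_fwd_sum, Finset.mul_sum, Finset.mul_sum]
  refine Finset.sum_congr rfl fun k hk => ?_
  have hk := (Nat.lt_succ_iff.1 (Finset.mem_range.1 hk))
  rw [intervalIntegral.integral_const_mul, (aux_mono α β hα hβ (m + k) (n - k)).2]
  have hk1 : (0 : ℝ) ≤ k := k.cast_nonneg
  have hk2 : (0 : ℝ) ≤ (n : ℝ) - k := by rw [sub_nonneg]; exact_mod_cast hk
  push_cast [Nat.cast_sub hk]
  rw [show α + (m + k) + (β + ((n : ℝ) - k)) + 1 = (α + β + m + 1) + n by ring,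
    show α + (m + k) + (β + ((n : ℝ) - k)) + 2 = α + β + m + n + 2 by ring,
    Real.rpow_add_natCast (by norm_num),
    show α + ((m : ℝ) + k) + 1 = (α + 1 + k) + m by ring,
    aux_asc_gamma (α + 1 + k) (by linarith), Nat.cast_choose ℝ hk, jc, aux_gamma_sub n k hk,
    Real.Gamma_nat_eq_factorial, show α + (k : ℝ) + 1 = α + 1 + k by ring,
    show β + ((n : ℝ) - k) + 1 = n - k + β + 1 by ring]
  have g1 := (Real.Gamma_pos_of_pos (show 0 < α + 1 + (k : ℝ) by linarith)).ne'
  have g2 := (Real.Gamma_pos_of_pos (show 0 < (n : ℝ) - k + β + 1 by linarith)).ne'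
  have g3 : ((n.factorial : ℕ) : ℝ) ≠ 0 := by positivity
  have g4 : (((n - k).factorial : ℕ) : ℝ) ≠ 0 := by positivity
  have g5 : ((k.factorial : ℕ) : ℝ) ≠ 0 := by positivity
  rw [inv_pow]
  field_simp

theorem aux_vander (α β : ℝ) (hα : -1 < α) (hβ : -1 < β) (n : ℕ) (hn : 1 ≤ n) :
    ∑ i ∈ Finset.range (n + 1), jc α β n i =
      Real.Gamma (2 * n + α + β + 1) / (n.factorial * Real.Gamma (n + α + β + 1)) := by
  have hn' : (1 : ℝ) ≤ n := by exact_mod_cast hn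
  have h := Ring.descPochhammer_smeval_add (R := ℝ) n (Commute.all (n + β) (n + α))
  rw [aux_desc _ _ (by linarith), Finset.Nat.sum_antidiagonal_eq_sum_range_succ_mk] at h
  rw [show 2 * (n : ℝ) + α + β + 1 = n + β + (n + α) + 1 by ring,
    show (n : ℝ) + α + β + 1 = n + β + (n + α) - n + 1 by ring, mul_comm (n.factorial : ℝ),
    ← div_div, h, Finset.sum_div]
  refine Finset.sum_congr rfl fun k hk => ?_
  have hk := (Nat.lt_succ_iff.1 (Finset.mem_range.1 hk))
  have hk1 : (0 : ℝ) ≤ k := k.cast_nonneg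
  have hk2 : (0 : ℝ) ≤ (n : ℝ) - k := by rw [sub_nonneg]; exact_mod_cast hk
  simp only
  rw [aux_desc _ _ (by linarith), aux_desc _ _ (by rw [Nat.cast_sub hk]; linarith),
    Nat.cast_choose ℝ hk, jc, aux_gamma_sub n k hk, Real.Gamma_nat_eq_factorial, Nat.cast_sub hk,
    show (n : ℝ) + α - (n - k) + 1 = α + k + 1 by ring,
    show (n : ℝ) + β - k + 1 = n - k + β + 1 by ring]
  have g1 := (Real.Gamma_pos_of_pos (show 0 < α + k + 1 by linarith)).ne'
  have g2 := (Real.Gamma_pos_of_pos (show 0 < (n : ℝ) - k + β + 1 by linarith)).ne'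
  field_simp

theorem aux_norm (α β : ℝ) (hα : -1 < α) (hβ : -1 < β) (n : ℕ) (hn : 1 ≤ n) :
    jacobiNormSq α β n = 2 ^ (α + β + 1) * Real.Gamma (n + α + 1) * Real.Gamma (n + β + 1) /
      ((2 * n + α + β + 1) * n.factorial * Real.Gamma (n + α + β + 1)) := by
  have hn' : (1 : ℝ) ≤ n := by exact_mod_cast hn
  have hf : (fun x : ℝ => (jacobiP α β n).eval x ^ 2 * (1 - x) ^ α * (1 + x) ^ β) =
      fun x : ℝ => ∑ m ∈ Finset.range (n + 1), ((taylor 1 (jacobiP α β n)).coeff m * (-1) ^ m) *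
        ((jacobiP α β n).eval x * (1 - x) ^ m * (1 - x) ^ α * (1 + x) ^ β) := by
    funext x
    have h1 : (jacobiP α β n).eval x = ∑ m ∈ Finset.range (n + 1),
        (taylor 1 (jacobiP α β n)).coeff m * (x - 1) ^ m := by
      rw [← eval_eq_sum_range' (aux_natDegree α β n), taylor_eval_sub]
    rw [sq]
    nth_rewrite 1 [h1]
    rw [Finset.sum_mul, Finset.sum_mul, Finset.sum_mul]
    refine Finset.sum_congr rfl fun k hk => ?_
    rw [show x - 1 = (-1) * (1 - x) by ring, mul_pow]
    ring
  rw [jacobiNormSq, hf, intervalIntegral.integral_finsetSum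
    (fun m hm => (aux_J α β hα hβ n m).1.const_mul _)]
  simp_rw [intervalIntegral.integral_const_mul]
  rw [Finset.sum_range_succ, Finset.sum_eq_zero, zero_add, (aux_J α β hα hβ n n).2,
    aux_fwd_monic _ _ _ (ascPochhammer_natDegree (S := ℝ) n) (monic_ascPochhammer ℝ n), aux_taylor_coeff]
  · have : ∑ i ∈ Finset.range (n + 1), jc α β n i *
        ((if i ≤ n then ((n - i).choose (n - i) : ℝ) else 0) * 2⁻¹ ^ n) =
        (Real.Gamma (2 * n + α + β + 1) / (n.factorial * Real.Gamma (n + α + β + 1))) *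
          2⁻¹ ^ n := by
      rw [← aux_vander α β hα hβ n hn, Finset.sum_mul]
      refine Finset.sum_congr rfl fun k hk => ?_
      have hk := (Nat.lt_succ_iff.1 (Finset.mem_range.1 hk))
      rw [if_pos hk, Nat.choose_self]
      simp
    rw [this, show α + β + n + n + 2 = (2 * n + α + β + 1) + 1 by ring,
      Real.Gamma_add_one (s := 2 * n + α + β + 1) (by linarith),
      show α + β + (n : ℝ) + 1 = (α + β + 1) + n by ring, Real.rpow_add_natCast (by norm_num)]
    have g1 := (Real.Gamma_pos_of_pos (show 0 < 2 * n + α + β + 1 by linarith)).ne'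
    have g2 := (Real.Gamma_pos_of_pos (show 0 < n + α + β + 1 by linarith)).ne'
    have g3 : 2 * n + α + β + 1 ≠ 0 := by linarith
    have : ((-1 : ℝ) ^ n) * (-1) ^ n = 1 := by rw [← mul_pow]; simp
    rw [inv_pow]
    field_simp
    linear_combination (Real.Gamma (n + α + 1) * Real.Gamma (n + β + 1)) * this
  · intro m hm
    rw [(aux_J α β hα hβ n m).2, aux_fwd]
    · simp
    · rw [ascPochhammer_natDegree]; exact Finset.mem_range.1 hm

theorem aux_term_equiv (α β : ℝ) (hα : -1 < α) (hβ : -1 < β) (k i : ℕ) (hi : i ≤ k) :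
    ∃ c : ℝ, 0 < c ∧ (fun n : ℕ => jc α β n i *
      ((if i ≤ k then ((n - i).choose (k - i) : ℝ) else 0) * 2⁻¹ ^ k)) ~[atTop]
      (fun n : ℕ => c * (n : ℝ) ^ (α + k + i)) := by
  have hi1 : (0 : ℝ) ≤ i := i.cast_nonneg
  have g1 := (Real.Gamma_pos_of_pos (show 0 < α + i + 1 by linarith))
  refine ⟨(Real.Gamma (α + i + 1) * i.factorial * (k - i).factorial)⁻¹ * 2⁻¹ ^ k,
    by positivity, ?_⟩
  have h := (((aux_gamma_equiv α).div (aux_gamma_equiv (-k))).mul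
    ((aux_gamma_equiv β).div (aux_gamma_equiv (β - i))))
  have h' := (IsEquivalent.refl (u := fun _ : ℕ => (Real.Gamma (α + i + 1) * i.factorial *
    (k - i).factorial)⁻¹ * (2⁻¹ : ℝ) ^ k) (l := atTop)).mul h
  refine (h'.congr_left ?_).congr_right ?_
  · filter_upwards [eventually_ge_atTop k] with n hn
    have hk2 : (k : ℝ) ≤ n := by exact_mod_cast hn
    have hi2 : (i : ℝ) ≤ k := by exact_mod_cast hi
    simp only [Pi.mul_apply, Pi.div_apply]
    rw [if_pos hi, Nat.cast_choose ℝ (by omega : k - i ≤ n - i), jc, aux_gamma_sub n i (by omega),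
      Real.Gamma_nat_eq_factorial, show n - i - (k - i) = n - k by omega,
      show (n : ℝ) + -k + 1 = n - k + 1 by ring, aux_gamma_sub n k hn,
      show (n : ℝ) + (β - i) + 1 = n - i + β + 1 by ring]
    have g2 := (Real.Gamma_pos_of_pos (show 0 < (n : ℝ) - i + β + 1 by linarith)).ne'
    have := g1.ne'
    field_simp
  · filter_upwards [eventually_gt_atTop 0] with n hn
    have hn : (0 : ℝ) < n := by exact_mod_cast hn
    simp only [Pi.mul_apply, Pi.div_apply]
    rw [show α + k + i = (α - (-k)) + (β - (β - i)) by ring, Real.rpow_add hn,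
      Real.rpow_sub hn, Real.rpow_sub hn]
    field_simp
    congr 1
    ring

theorem aux_rpow_mono_O (a b : ℝ) (h : a ≤ b) :
    (fun n : ℕ => (n : ℝ) ^ a) =O[atTop] (fun n : ℕ => (n : ℝ) ^ b) := by
  refine IsBigO.of_bound 1 ?_
  filter_upwards [eventually_gt_atTop 0] with n hn
  have hn' : (1 : ℝ) ≤ n := by exact_mod_cast hn
  rw [Real.norm_of_nonneg (by positivity), Real.norm_of_nonneg (by positivity), one_mul]
  exact Real.rpow_le_rpow_of_exponent_le hn' h

theorem aux_term_O (α β : ℝ) (hα : -1 < α) (hβ : -1 < β) (k i : ℕ) (hi : i ≤ k) :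
    (fun n : ℕ => jc α β n i *
      ((if i ≤ k then ((n - i).choose (k - i) : ℝ) else 0) * 2⁻¹ ^ k)) =O[atTop]
      (fun n : ℕ => (n : ℝ) ^ (α + 2 * k)) := by
  obtain ⟨c, hc, h⟩ := aux_term_equiv α β hα hβ k i hi
  have hi2 : (i : ℝ) ≤ k := by exact_mod_cast hi
  exact (h.isBigO.trans (isBigO_const_mul_self c _ _)).trans (aux_rpow_mono_O _ _ (by linarith))

theorem aux_jc_nonneg (α β : ℝ) (hα : -1 < α) (hβ : -1 < β) (n i : ℕ) (hi : i ≤ n) :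
    0 ≤ jc α β n i := by
  have hi2 : (i : ℝ) ≤ n := by exact_mod_cast hi
  have hi1 : (0 : ℝ) ≤ i := i.cast_nonneg
  have g1 := (Real.Gamma_pos_of_pos (show 0 < (n : ℝ) + α + 1 by linarith))
  have g2 := (Real.Gamma_pos_of_pos (show 0 < (n : ℝ) - i + 1 by linarith))
  have g3 := (Real.Gamma_pos_of_pos (show 0 < α + i + 1 by linarith))
  have g4 := (Real.Gamma_pos_of_pos (show 0 < (n : ℝ) + β + 1 by linarith))
  have g5 := (Real.Gamma_pos_of_pos (show 0 < (i : ℝ) + 1 by linarith))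
  have g6 := (Real.Gamma_pos_of_pos (show 0 < (n : ℝ) - i + β + 1 by linarith))
  unfold jc
  positivity

theorem aux_D_theta (α β : ℝ) (hα : -1 < α) (hβ : -1 < β) (k : ℕ) :
    (fun n : ℕ => (derivative^[k] (jacobiP α β n)).eval 1) =Θ[atTop]
      (fun n : ℕ => (n : ℝ) ^ (α + 2 * k)) := by
  have hD : ∀ n, k ≤ n → (derivative^[k] (jacobiP α β n)).eval 1 = k.factorial *
      ∑ i ∈ Finset.range (k + 1), jc α β n i *
      ((if i ≤ k then ((n - i).choose (k - i) : ℝ) else 0) * 2⁻¹ ^ k) := by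
    intro n hn
    rw [aux_deriv_eval, aux_taylor_coeff]
    congr 1
    symm
    refine Finset.sum_subset (Finset.range_subset_range.2 (by omega)) fun i h1 h2 => ?_
    rw [if_neg (by simpa using h2)]
    simp
  constructor
  · have h1 : (fun n : ℕ => (k.factorial : ℝ) * ∑ i ∈ Finset.range (k + 1), jc α β n i *
      ((if i ≤ k then ((n - i).choose (k - i) : ℝ) else 0) * 2⁻¹ ^ k)) =O[atTop]
      (fun n : ℕ => (n : ℝ) ^ (α + 2 * k)) :=
      ((IsBigO.sum (s := Finset.range (k + 1)) fun i hi => aux_term_O α β hα hβ k i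
        (Nat.lt_succ_iff.1 (Finset.mem_range.1 hi))).congr_left
          (fun n => by simp only [Finset.sum_apply])).const_mul_left _
    refine h1.congr' ?_ EventuallyEq.rfl
    filter_upwards [eventually_ge_atTop k] with n hn
    exact (hD n hn).symm
  · obtain ⟨c, hc, h⟩ := aux_term_equiv α β hα hβ k k le_rfl
    have h1 : (fun n : ℕ => (n : ℝ) ^ (α + 2 * k)) =O[atTop]
        (fun n : ℕ => c * (n : ℝ) ^ (α + k + k)) := by
      rw [show α + 2 * (k : ℝ) = α + k + k by ring]
      exact isBigO_self_const_mul hc.ne' _ _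
    refine (h1.trans h.symm.isBigO).trans (IsBigO.of_bound 1 ?_)
    filter_upwards [eventually_ge_atTop k] with n hn
    have hnn : ∀ i ∈ Finset.range (k + 1), 0 ≤ jc α β n i *
      ((if i ≤ k then ((n - i).choose (k - i) : ℝ) else 0) * 2⁻¹ ^ k) := by
      intro i hi
      have := Finset.mem_range.1 hi
      refine mul_nonneg (aux_jc_nonneg α β hα hβ n i (by omega)) ?_
      split_ifs <;> positivity
    have hs := Finset.single_le_sum hnn (Finset.self_mem_range_succ k)
    rw [one_mul, hD n hn, Real.norm_of_nonneg (hnn k (Finset.self_mem_range_succ k)),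
      Real.norm_of_nonneg (mul_nonneg (by positivity) (Finset.sum_nonneg hnn))]
    refine hs.trans ?_
    refine le_mul_of_one_le_left (Finset.sum_nonneg hnn) ?_
    exact_mod_cast Nat.factorial_pos k

theorem aux_norm_inv (α β : ℝ) (hα : -1 < α) (hβ : -1 < β) :
    (fun n : ℕ => (jacobiNormSq α β n)⁻¹) =O[atTop] (fun n : ℕ => (n : ℝ) ^ (1 : ℝ)) := by
  have h := ((aux_gamma_equiv (α + β)).div
    ((aux_gamma_equiv α).mul (aux_gamma_equiv β))).isBigO
  have hl : (fun n : ℕ => (2 * n + α + β + 1 : ℝ)) =O[atTop] (fun n : ℕ => (n : ℝ)) := by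
    have h1 : (fun n : ℕ => (2 * n : ℝ)) =O[atTop] (fun n : ℕ => (n : ℝ)) :=
      isBigO_const_mul_self _ _ _
    have h2 : (fun _ : ℕ => (α + β + 1 : ℝ)) =O[atTop] (fun n : ℕ => (n : ℝ)) :=
      (isLittleO_const_left.2 (Or.inr
        (tendsto_norm_atTop_atTop.comp tendsto_natCast_atTop_atTop))).isBigO
    exact (h1.add h2).congr_left fun n => by ring
  have hfac := (isBigO_refl (fun n : ℕ => (n.factorial : ℝ)) atTop)
  have hall := ((h.mul (hl.mul hfac)).const_mul_left (2 ^ (α + β + 1) : ℝ)⁻¹)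
  refine hall.congr' ?_ ?_
  · filter_upwards [eventually_ge_atTop 1] with n hn
    rw [aux_norm α β hα hβ n hn]
    simp only [Pi.mul_apply, Pi.div_apply, ← add_assoc, div_eq_mul_inv, mul_inv, inv_inv]
    ring
  · filter_upwards [eventually_gt_atTop 0] with n hn
    have hn : (0 : ℝ) < n := by exact_mod_cast hn
    simp only [Pi.mul_apply, Pi.div_apply, Real.rpow_one]
    rw [Real.rpow_add hn]
    field_simp

theorem aux_norm_nonneg (α β : ℝ) (n : ℕ) : 0 ≤ jacobiNormSq α β n := by
  unfold jacobiNormSq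
  refine intervalIntegral.integral_nonneg (by norm_num) fun x hx => ?_
  have := Real.rpow_nonneg (by linarith [hx.2] : 0 ≤ 1 - x) α
  have := Real.rpow_nonneg (by linarith [hx.1] : 0 ≤ 1 + x) β
  positivity

theorem aux_kern_O (α β : ℝ) (hα : -1 < α) (hβ : -1 < β) (j k : ℕ) :
    (fun n : ℕ => kernK α β j k (n - 1) 1 1) =O[atTop]
      (fun n : ℕ => (n : ℝ) ^ (2 * α + 2 * j + 2 * k + 2)) := by
  set u : ℕ → ℝ := fun i => (derivative^[j] (jacobiP α β i)).eval 1 *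
      (derivative^[k] (jacobiP α β i)).eval 1 / jacobiNormSq α β i with hu
  have hj : (0 : ℝ) ≤ j := j.cast_nonneg
  have hk : (0 : ℝ) ≤ k := k.cast_nonneg
  have h1 : u =O[atTop] (fun n : ℕ => (n : ℝ) ^ (2 * α + 2 * j + 2 * k + 1)) := by
    refine (((aux_D_theta α β hα hβ j).1.mul (aux_D_theta α β hα hβ k).1).mul
      (aux_norm_inv α β hα hβ)).congr' EventuallyEq.rfl ?_
    filter_upwards [eventually_gt_atTop 0] with n hn
    have hn : (0 : ℝ) < n := by exact_mod_cast hn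
    rw [← Real.rpow_add hn, ← Real.rpow_add hn]
    ring_nf
  have h2 := h1.comp_tendsto (tendsto_add_atTop_nat 1)
  rw [isBigO_nat_atTop_iff (by
    intro x hx
    have : (0 : ℝ) < ((x + 1 : ℕ) : ℝ) ^ (2 * α + 2 * j + 2 * k + 1) := by positivity
    exact absurd hx this.ne')] at h2
  obtain ⟨C, hC⟩ := h2
  obtain ⟨B, hB0, hB⟩ := aux_sum_rpow (2 * α + 2 * j + 2 * k + 1) (by linarith)
  have hC0 : 0 ≤ C := by
    have := hC 0
    simp at this
    exact (abs_nonneg _).trans this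
  refine IsBigO.of_bound (C * B + ‖u 0‖) ?_
  filter_upwards [eventually_ge_atTop 1] with n hn
  obtain ⟨m, rfl⟩ := Nat.exists_eq_add_of_le' hn
  have hp : 0 ≤ 2 * α + 2 * j + 2 * k + 2 := by linarith
  have e1 : (1 : ℝ) ≤ ((m + 1 : ℕ) : ℝ) ^ (2 * α + 2 * j + 2 * k + 2) :=
    Real.one_le_rpow (by push_cast; linarith [(m.cast_nonneg : (0 : ℝ) ≤ m)]) hp
  have e2 : (m : ℝ) ^ (2 * α + 2 * j + 2 * k + 2) ≤
      ((m + 1 : ℕ) : ℝ) ^ (2 * α + 2 * j + 2 * k + 2) :=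
    Real.rpow_le_rpow (by positivity) (by push_cast; linarith) hp
  have e3 : kernK α β j k (m + 1 - 1) 1 1 = ∑ i ∈ Finset.range m, u (i + 1) + u 0 := by
    rw [kernK, Nat.add_sub_cancel, ← Finset.sum_range_succ']
  have e4 : ‖∑ i ∈ Finset.range m, u (i + 1)‖ ≤
      C * (B * (m : ℝ) ^ (2 * α + 2 * j + 2 * k + 2)) := by
    refine (norm_sum_le _ _).trans ?_
    have hBm := hB m
    rw [show 2 * α + 2 * (j : ℝ) + 2 * k + 1 + 1 = 2 * α + 2 * j + 2 * k + 2 by ring] at hBm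
    refine le_trans ?_ (mul_le_mul_of_nonneg_left hBm hC0)
    rw [Finset.mul_sum]
    refine Finset.sum_le_sum fun i hi => ?_
    have := hC i
    simp only [Function.comp] at this
    rwa [Real.norm_of_nonneg (by positivity :
      (0 : ℝ) ≤ ((i + 1 : ℕ) : ℝ) ^ (2 * α + 2 * j + 2 * k + 1))] at this
  rw [e3, Real.norm_of_nonneg (by positivity :
      (0 : ℝ) ≤ ((m + 1 : ℕ) : ℝ) ^ (2 * α + 2 * j + 2 * k + 2))]
  refine (norm_add_le _ _).trans ?_
  rw [add_mul]
  refine add_le_add (e4.trans ?_) (le_mul_of_one_le_right (norm_nonneg _) e1)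
  rw [mul_assoc]
  gcongr

theorem aux_kern_nonneg (α β : ℝ) (j n : ℕ) : 0 ≤ kernK α β j j n 1 1 := by
  unfold kernK
  exact Finset.sum_nonneg fun i _ => div_nonneg (mul_self_nonneg _) (aux_norm_nonneg α β i)

theorem aux_kern_deriv (α β : ℝ) (j k n : ℕ) :
    (derivative^[k] (kernKPoly α β j n)).eval 1 = kernK α β j k n 1 1 := by
  unfold kernKPoly kernK
  rw [iterate_derivative_sum, eval_finsetSum]
  refine Finset.sum_congr rfl fun i _ => ?_
  rw [iterate_derivative_C_mul, eval_mul, eval_C]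
  ring

/-- limit of `Q_n^{(k)}(1)/(P_n^{(α,β)})^{(k)}(1)` when `γ > 2(α+2j+1)`. -/
theorem sobQ_deriv_ratio_large_gamma (α β : ℝ) (hα : -1 < α) (hβ : -1 < β) (j : ℕ)
    (γ M : ℝ) (hM : 0 < M) (Ms : ℕ → ℝ) (hMs : ∀ n, 0 ≤ Ms n)
    (hlim : Filter.Tendsto (fun n : ℕ => Ms n * (n : ℝ) ^ γ) Filter.atTop (nhds M))
    (hγ : 2 * (α + 2 * j + 1) < γ) (k : ℕ) :
    Filter.Tendsto
      (fun n : ℕ => (Polynomial.derivative^[k] (sobQ α β j Ms n)).eval 1 /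
        (Polynomial.derivative^[k] (jacobiP α β n)).eval 1)
      Filter.atTop (nhds 1) := by
  have hMO : Ms =O[atTop] (fun n : ℕ => (n : ℝ) ^ (-γ)) := by
    have h := (hlim.isBigO_one ℝ).mul
      (isBigO_refl (fun n : ℕ => (n : ℝ) ^ (-γ)) atTop)
    refine h.congr' ?_ (Eventually.of_forall fun n => by simp)
    filter_upwards [eventually_gt_atTop 0] with n hn
    have hn : (0 : ℝ) < n := by exact_mod_cast hn
    rw [mul_assoc, ← Real.rpow_add hn]
    simp
  have hden : (fun n : ℕ => (1 + Ms n * kernK α β j j (n - 1) 1 1)⁻¹) =O[atTop]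
      (fun _ : ℕ => (1 : ℝ)) := by
    refine IsBigO.of_bound 1 (Eventually.of_forall fun n => ?_)
    have h1 : 1 ≤ 1 + Ms n * kernK α β j j (n - 1) 1 1 := by
      linarith [mul_nonneg (hMs n) (aux_kern_nonneg α β j (n - 1))]
    rw [Real.norm_of_nonneg (inv_nonneg.2 (by linarith))]
    simpa using inv_le_one_of_one_le₀ h1
  have hth := aux_D_theta α β hα hβ k
  have hinv : (fun n : ℕ => ((derivative^[k] (jacobiP α β n)).eval 1)⁻¹) =O[atTop]
      (fun n : ℕ => ((n : ℝ) ^ (α + 2 * k))⁻¹) := hth.inv.1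
  have hE := (((hMO.mul (aux_D_theta α β hα hβ j).1).mul hden).mul
    (aux_kern_O α β hα hβ j k)).mul hinv
  have hE0 : Tendsto (fun n : ℕ => Ms n * (derivative^[j] (jacobiP α β n)).eval 1 *
      (1 + Ms n * kernK α β j j (n - 1) 1 1)⁻¹ * kernK α β j k (n - 1) 1 1 *
      ((derivative^[k] (jacobiP α β n)).eval 1)⁻¹) atTop (nhds 0) := by
    refine hE.trans_tendsto ?_
    have h0 : Tendsto (fun n : ℕ => (n : ℝ) ^ (-(γ - 2 * (α + 2 * j + 1)))) atTop (nhds 0) :=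
      (tendsto_rpow_neg_atTop (by linarith)).comp tendsto_natCast_atTop_atTop
    refine h0.congr' ?_
    filter_upwards [eventually_gt_atTop 0] with n hn
    have hn : (0 : ℝ) < n := by exact_mod_cast hn
    rw [← Real.rpow_neg hn.le, mul_one, ← Real.rpow_add hn, ← Real.rpow_add hn,
      ← Real.rpow_add hn]
    congr 1
    ring
  have hne : ∀ᶠ n : ℕ in atTop, (derivative^[k] (jacobiP α β n)).eval 1 ≠ 0 := by
    filter_upwards [hth.2.eq_zero_imp, eventually_gt_atTop 0] with n h hn h0
    have hn : (0 : ℝ) < n := by exact_mod_cast hn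
    exact (Real.rpow_pos_of_pos hn _).ne' (h h0)
  have hfin := hE0.const_sub 1
  rw [sub_zero] at hfin
  refine hfin.congr' ?_
  filter_upwards [hne] with n hn
  rw [sobQ, iterate_derivative_sub, eval_sub, iterate_derivative_C_mul, eval_mul, eval_C,
    aux_kern_deriv, sub_div, div_self hn]
  simp only [div_eq_mul_inv]
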